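/- arXiv:1811.03982 — 3 statements merged into one kernel-verified Lean document; each statement's English description precedes it below -/
import Mathlib

section
/- With the delay-indicator setup below, if τ^l(k) = 1 for some k ≥ 0 and some l ∈ {1,…,L}, then x^{l'}(k) = 0 for every l' with l < l' ≤ L. -/
/-!
Unrolling the recursion, `x l' k` is the sum of the terms `τ (l' + i) (k - 1 - i) * μ (k - 1 - i)`
for `0 ≤ i ≤ L - l'`. Each is a packet sent strictly before time `k` and arriving at time
`k - 1 + l'`, which is at least `k + l` when `l < l'`. In-order arrival relative to the packet sent
at time `k` with delay `l` therefore makes every one of these indicators vanish. The unrolling is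
an induction on `L - l'` along the line where the time plus the slot index is constant.
-/

theorem later_delay_slots_vanish (L : ℤ) (hL : 1 ≤ L)
    (τ : ℤ → ℤ → ℝ) (μ : ℤ → ℝ) (x : ℤ → ℤ → ℝ)
    (hτ01 : ∀ l k, τ l k = 0 ∨ τ l k = 1)
    (hτneg : ∀ l k, k < 0 → τ l k = 0)
    (hτuniq : ∀ k l₁ l₂, 1 ≤ l₁ → l₁ ≤ L → 1 ≤ l₂ → l₂ ≤ L →
      τ l₁ k = 1 → τ l₂ k = 1 → l₁ = l₂)
    (horder : ∀ k₁ k₂ l₁ l₂, 1 ≤ l₁ → l₁ ≤ L → 1 ≤ l₂ → l₂ ≤ L →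
      τ l₁ k₁ = 1 → τ l₂ k₂ = 1 → k₁ < k₂ → k₁ + l₁ < k₂ + l₂)
    (hμneg : ∀ k, k < 0 → μ k = 0)
    (hx0 : ∀ l k, k ≤ 0 → x l k = 0)
    (hxL : ∀ k, x L (k + 1) = τ L k * μ k)
    (hxl : ∀ l k, 1 ≤ l → l < L → x l (k + 1) = τ l k * μ k + x (l + 1) k) :
    ∀ k l, 0 ≤ k → 1 ≤ l → l ≤ L → τ l k = 1 →
      ∀ l', l < l' → l' ≤ L → x l' k = 0 := by
  intro k l _ hl1 hlL hτ
  -- The slot index plus the time is invariant along the recursion, so the bound `k + l < m + k'`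
  -- is the form of `l < l'` that survives the induction step.
  have key : ∀ n : ℕ, ∀ m k' : ℤ, m + n = L → k' ≤ k → k + l < m + k' → x m k' = 0 := by
    intro n
    induction n with
    | zero =>
      intro m k' hm hk' hlt
      obtain rfl : m = L := by simpa using hm
      have h := hxL (k' - 1)
      rw [sub_add_cancel] at h
      rcases hτ01 m (k' - 1) with h0 | h1
      · rw [h, h0, zero_mul]
      · have := horder (k' - 1) k m l hL le_rfl hl1 hlL h1 hτ (by lia)
        lia
    | succ n ih =>
      intro m k' hm hk' hlt
      push_cast at hm
      have h := hxl m (k' - 1) (by lia) (by lia)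
      rw [sub_add_cancel, ih (m + 1) (k' - 1) (by lia) (by lia) (by lia)] at h
      rcases hτ01 m (k' - 1) with h0 | h1
      · rw [h, h0, zero_mul, add_zero]
      · have := horder (k' - 1) k m l (by lia) (by lia) hl1 hlL h1 hτ (by lia)
        lia
  intro l' hll' hl'L
  exact key (L - l').toNat l' k (by lia) le_rfl (by lia)
end

section
/- Let q : ℝ^d → ℝ be a ν-strongly convex differentiable function with ν > 0 whose gradient ∇q is Lipschitz continuous with constant ℒ > 0, and let c ≥ 0. Then there exist a compact set S ⊆ ℝ^d and a scalar R such that for every α ∈ (0, ν/(8ℒ²)], every v ∈ ℝ^d, and every p ∈ ℝ^d with ‖p‖ ≤ c, the point u := v − α(∇q(v) + p) satisfies ‖u‖ ≤ ‖v‖ whenever v ∉ S, and ‖u‖ ≤ R whenever v ∈ S. -/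
/-!
Strong convexity makes the gradient strongly monotone, so with `r = ‖v‖`, `K = ‖∇q 0‖ + c` and
`g = ∇q v + p` one has `⟪g, v⟫ ≥ ν r² - K r`, while the Lipschitz bound gives `‖g‖ ≤ L r + K`. In
`‖v - α g‖² = r² - 2 α ⟪g, v⟫ + α² ‖g‖²` the bound `α ≤ ν / (8 L²)` lets the quadratic gain
`2 α ν r²` dominate the other terms as soon as `r ≥ 2 K / ν` and `r ≥ K / L`. Hence `S` can be the
closed ball of radius `2 K / ν + K / L`, on which one step moves a point by a bounded amount.
-/

open scoped RealInnerProductSpace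

theorem perturbed_gradient_step_bounded {d : ℕ}
    (q : EuclideanSpace ℝ (Fin d) → ℝ) (ν L c : ℝ)
    (hν : 0 < ν) (hL : 0 < L) (hc : 0 ≤ c)
    (hdiff : Differentiable ℝ q)
    (hsc : ∀ x y : EuclideanSpace ℝ (Fin d),
      q x + ⟪gradient q x, y - x⟫ + ν / 2 * ‖y - x‖ ^ 2 ≤ q y)
    (hlip : ∀ x y : EuclideanSpace ℝ (Fin d),
      ‖gradient q x - gradient q y‖ ≤ L * ‖x - y‖) :
    ∃ (S : Set (EuclideanSpace ℝ (Fin d))) (R : ℝ), IsCompact S ∧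
      ∀ α : ℝ, 0 < α → α ≤ ν / (8 * L ^ 2) →
        ∀ v p : EuclideanSpace ℝ (Fin d), ‖p‖ ≤ c →
          (v ∉ S → ‖v - α • (gradient q v + p)‖ ≤ ‖v‖) ∧
          (v ∈ S → ‖v - α • (gradient q v + p)‖ ≤ R) := by
  set K : ℝ := ‖gradient q 0‖ + c with hK
  have hK0 : 0 ≤ K := by positivity
  set T : ℝ := 2 * K / ν + K / L with hT
  have hT0 : 0 ≤ T := by positivity
  refine ⟨Metric.closedBall 0 T, T + ν / (8 * L ^ 2) * (L * T + K),
    isCompact_closedBall _ _, ?_⟩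
  intro α hα hαle v p hp
  have hr0 : 0 ≤ ‖v‖ := norm_nonneg v
  have hg : ‖gradient q v + p‖ ≤ L * ‖v‖ + K := by
    have h1 : ‖gradient q v - gradient q 0‖ ≤ L * ‖v‖ := by simpa using hlip v 0
    have h2 : ‖gradient q v‖ ≤ ‖gradient q v - gradient q 0‖ + ‖gradient q 0‖ := by
      simpa using norm_add_le (gradient q v - gradient q 0) (gradient q 0)
    have h3 := norm_add_le (gradient q v) p
    linarith
  constructor
  · intro hv
    have hTv : T < ‖v‖ := by simpa using hv
    have hin : ν * ‖v‖ ^ 2 - K * ‖v‖ ≤ ⟪gradient q v + p, v⟫ := by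
      have h1 := hsc v 0
      have h2 := hsc 0 v
      simp only [zero_sub, sub_zero, inner_neg_right, norm_neg] at h1 h2
      have h3 := (abs_le.mp (abs_real_inner_le_norm (gradient q 0) v)).1
      have h4 := (abs_le.mp (abs_real_inner_le_norm p v)).1
      have h5 := mul_le_mul_of_nonneg_right hp hr0
      rw [inner_add_left, hK]
      linarith
    have hKν : 2 * K ≤ ν * ‖v‖ := by
      have h : 2 * K / ν ≤ ‖v‖ := by
        have : 0 ≤ K / L := by positivity
        linarith
      rw [div_le_iff₀ hν] at h
      linarith
    have hKL : K ≤ L * ‖v‖ := by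
      have h : K / L ≤ ‖v‖ := by
        have : 0 ≤ 2 * K / ν := by positivity
        linarith
      rw [div_le_iff₀ hL] at h
      linarith
    have hαL : α * (8 * L ^ 2) ≤ ν := (le_div_iff₀ (by positivity)).mp hαle
    -- Since `K ≤ L ‖v‖`, the squared gradient is at most `4 L² ‖v‖²`.
    have hsq : α * ‖gradient q v + p‖ ^ 2 ≤ ν * ‖v‖ ^ 2 / 2 := by
      have h1 : ‖gradient q v + p‖ ^ 2 ≤ (2 * (L * ‖v‖)) ^ 2 :=
        pow_le_pow_left₀ (norm_nonneg _) (by linarith) 2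
      have h2 := mul_le_mul_of_nonneg_left h1 hα.le
      have h3 := mul_le_mul_of_nonneg_right hαL (sq_nonneg ‖v‖)
      linarith
    have hlin : 2 * K * ‖v‖ ≤ ν * ‖v‖ ^ 2 := by
      have := mul_le_mul_of_nonneg_right hKν hr0
      linarith
    have hfin : α * (α * ‖gradient q v + p‖ ^ 2 - 2 * ⟪gradient q v + p, v⟫) ≤ 0 := by
      apply mul_nonpos_of_nonneg_of_nonpos hα.le
      have : 0 ≤ ν * ‖v‖ ^ 2 := by positivity
      linarith
    refine (sq_le_sq₀ (norm_nonneg _) hr0).mp ?_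
    rw [norm_sub_sq_real, inner_smul_right, norm_smul, Real.norm_of_nonneg hα.le,
      real_inner_comm]
    linarith
  · intro hv
    have hvT : ‖v‖ ≤ T := by simpa using hv
    have h1 := norm_sub_le v (α • (gradient q v + p))
    rw [norm_smul, Real.norm_of_nonneg hα.le] at h1
    have h2 : ‖gradient q v + p‖ ≤ L * T + K := by
      have := mul_le_mul_of_nonneg_left hvT hL.le
      linarith
    have h3 := mul_le_mul hαle h2 (norm_nonneg _) (by positivity)
    linarith
end

section
/- Let F : ℝ^d → ℝ be a μ-strongly convex differentiable function with μ > 0 whose gradient is Lipschitz continuous with constant ℒ > 0, and let C ≥ 0. Let (p(k))_{k≥1} be any sequence in ℝ^d with ‖p(k)‖ ≤ C for all k, and let (w(k))_{k≥1} be generated by w(k+1) = w(k) − (1/(μk)) (∇F(w(k)) + p(k)) from an arbitrary initial point w(1) ∈ ℝ^d. Then the sequence (w(k)) is bounded: there exists B such that ‖w(k)‖ ≤ B for all k ≥ 1. -/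
/-!
The origin serves as reference point, so no minimizer is needed. Put `h x = ∇F x - ∇F 0`. Strong
convexity gives `⟪h x, x⟫ ≥ μ ‖x‖²` and the Lipschitz condition gives `‖h x‖ ≤ L ‖x‖`, so for a
step-size `a ≤ μ / L²` with `a μ ≤ 1` the map `x ↦ x - a h x` shrinks norms by the factor
`1 - a μ / 2` (`norm_step_le`). The rest of the update, `a (∇F 0 + p k)`, has norm at most `a D`
with `D = ‖∇F 0‖ + C`, so once the step-size is small every ball of radius `B ≥ 2 D / μ` is mapped
into itself. A `B` that also dominates the finitely many earlier iterates bounds the sequence.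
-/

open scoped RealInnerProductSpace

/-- Strong convexity makes the gradient strongly monotone; here relative to the origin. -/
lemma strong_monotone_gradient {d : ℕ} (F : EuclideanSpace ℝ (Fin d) → ℝ) (μ : ℝ)
    (hsc : ∀ x y : EuclideanSpace ℝ (Fin d),
      F x + ⟪gradient F x, y - x⟫ + μ / 2 * ‖y - x‖ ^ 2 ≤ F y)
    (x : EuclideanSpace ℝ (Fin d)) :
    μ * ‖x‖ ^ 2 ≤ ⟪gradient F x - gradient F 0, x⟫ := by
  have h1 := hsc 0 x
  have h2 := hsc x 0
  simp only [sub_zero, zero_sub, norm_neg, inner_neg_right] at h1 h2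
  rw [inner_sub_left]
  linarith

lemma norm_step_le {E : Type*} [NormedAddCommGroup E] [InnerProductSpace ℝ E]
    {μ L a : ℝ} (x h : E) (ha : 0 ≤ a) (haμ : a * μ ≤ 1) (haL : a * L ^ 2 ≤ μ)
    (hmono : μ * ‖x‖ ^ 2 ≤ ⟪h, x⟫) (hlip : ‖h‖ ≤ L * ‖x‖) :
    ‖x - a • h‖ ≤ (1 - a * μ / 2) * ‖x‖ := by
  have hx := norm_nonneg x
  refine abs_le_of_sq_le_sq' ?_ (mul_nonneg (by linarith) hx) |>.2
  have hexp : ‖x - a • h‖ ^ 2 = ‖x‖ ^ 2 - 2 * a * ⟪h, x⟫ + a ^ 2 * ‖h‖ ^ 2 := by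
    rw [norm_sub_sq_real, real_inner_smul_right, real_inner_comm, norm_smul, mul_pow,
      Real.norm_eq_abs, sq_abs]
    ring
  have h1 : a * (μ * ‖x‖ ^ 2) ≤ a * ⟪h, x⟫ := mul_le_mul_of_nonneg_left hmono ha
  have h2 : ‖h‖ ^ 2 ≤ (L * ‖x‖) ^ 2 := pow_le_pow_left₀ (norm_nonneg h) hlip 2
  have h3 : a ^ 2 * ‖h‖ ^ 2 ≤ a ^ 2 * (L * ‖x‖) ^ 2 :=
    mul_le_mul_of_nonneg_left h2 (sq_nonneg a)
  have h4 : a * ‖x‖ ^ 2 * (a * L ^ 2) ≤ a * ‖x‖ ^ 2 * μ :=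
    mul_le_mul_of_nonneg_left haL (by positivity)
  rw [hexp]
  nlinarith [sq_nonneg (a * μ * ‖x‖)]

theorem perturbed_gradient_descent_bounded {d : ℕ}
    (F : EuclideanSpace ℝ (Fin d) → ℝ) (μ L C : ℝ)
    (hμ : 0 < μ) (hL : 0 < L) (hC : 0 ≤ C)
    (hdiff : Differentiable ℝ F)
    (hsc : ∀ x y : EuclideanSpace ℝ (Fin d),
      F x + ⟪gradient F x, y - x⟫ + μ / 2 * ‖y - x‖ ^ 2 ≤ F y)
    (hlip : ∀ x y : EuclideanSpace ℝ (Fin d),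
      ‖gradient F x - gradient F y‖ ≤ L * ‖x - y‖)
    (w p : ℕ → EuclideanSpace ℝ (Fin d))
    (hp : ∀ k, 1 ≤ k → ‖p k‖ ≤ C)
    (hw : ∀ k : ℕ, 1 ≤ k →
      w (k + 1) = w k - (1 / (μ * k)) • (gradient F (w k) + p k)) :
    ∃ B : ℝ, ∀ k : ℕ, 1 ≤ k → ‖w k‖ ≤ B := by
  obtain ⟨N, hN⟩ := exists_nat_ge (L ^ 2 / μ ^ 2)
  set D : ℝ := ‖gradient F 0‖ + C with hD
  have hD0 : 0 ≤ D := by positivity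
  set B : ℝ := ∑ k ∈ Finset.range (N + 2), ‖w k‖ + 2 * D / μ with hB
  have hBD : 2 * D / μ ≤ B := le_add_of_nonneg_left (Finset.sum_nonneg fun _ _ => norm_nonneg _)
  have hinit : ∀ k < N + 2, ‖w k‖ ≤ B := fun k hk =>
    (Finset.single_le_sum (f := fun k => ‖w k‖) (fun _ _ => norm_nonneg _)
      (Finset.mem_range.2 hk)).trans (le_add_of_nonneg_right (by positivity))
  have htail : ∀ k, N + 1 ≤ k → ‖w k‖ ≤ B := by
    intro k hk
    induction k, hk using Nat.le_induction with
    | base => exact hinit _ (by omega)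
    | succ k hk ih =>
      have hk1 : 1 ≤ k := by omega
      have hkR : (1 : ℝ) ≤ k := by exact_mod_cast hk1
      have hNk : (N : ℝ) ≤ k := by exact_mod_cast (by omega : N ≤ k)
      set a : ℝ := 1 / (μ * k) with ha
      have ha0 : 0 ≤ a := by positivity
      have haμ : a * μ ≤ 1 := by
        rw [ha, div_mul_eq_mul_div, div_le_one (by positivity)]
        nlinarith
      have haL : a * L ^ 2 ≤ μ := by
        rw [ha, div_mul_eq_mul_div, div_le_iff₀ (by positivity)]
        have := (div_le_iff₀ (by positivity)).1 (hN.trans hNk)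
        linarith
      have hstep := norm_step_le (w k) (gradient F (w k) - gradient F 0) ha0 haμ haL
        (strong_monotone_gradient F μ hsc (w k)) (by simpa using hlip (w k) 0)
      have hq : ‖a • (gradient F 0 + p k)‖ ≤ a * D := by
        rw [norm_smul, Real.norm_of_nonneg ha0]
        exact mul_le_mul_of_nonneg_left
          ((norm_add_le _ _).trans (add_le_add le_rfl (hp k hk1))) ha0
      have heq : w (k + 1) =
          (w k - a • (gradient F (w k) - gradient F 0)) - a • (gradient F 0 + p k) := by
        rw [hw k hk1]
        module
      have hB' : a * (2 * D) ≤ a * (B * μ) :=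
        mul_le_mul_of_nonneg_left ((div_le_iff₀ hμ).1 hBD) ha0
      calc ‖w (k + 1)‖ ≤ (1 - a * μ / 2) * ‖w k‖ + a * D := by
            rw [heq]
            exact (norm_sub_le _ _).trans (add_le_add hstep hq)
        _ ≤ (1 - a * μ / 2) * B + a * D := by
            gcongr
            linarith
        _ ≤ B := by linarith
  refine ⟨B, fun k _ => ?_⟩
  rcases lt_or_ge k (N + 2) with h | h
  · exact hinit k h
  · exact htail k (by omega)
end
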